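/- Let f ∈ ℤ[x] be a polynomial of degree d ≥ 2 with positive leading coefficient having at least two distinct roots in an algebraic closure of ℚ, let m ≥ 2 be an integer, and let F(x) = f(x)^m. Then there exists an integer δ ≥ 2 such that: (i) for all positive integers s > r, every irreducible factor of G_{s,r}(x,y) = s·f(y) − r·f(x) in ℝ[x,y] has total degree at least δ; and (ii) for every ε > 0 there is a constant C (depending only on F and ε) such that #Invisible_F(N) ≤ C·N^{1 + 1/δ + ε} for all positive integers N. -/

import Mathlib

open Polynomial Filter

/-- A lattice point `(a, h)` (with `a, h` positive integers) is *visible along* `F`. -/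
def VisibleAlong (F : Polynomial ℤ) (a h : ℤ) : Prop :=
  ∃ t : ℚ, (h : ℚ) = t * ((F.eval a : ℤ) : ℚ) ∧
    ∀ u : ℤ, 0 < u → (∃ k : ℤ, 0 < k ∧ (k : ℚ) = t * ((F.eval u : ℤ) : ℚ)) → a ≤ u

/-- The set of lattice points in `[1,N]²` that are invisible along `F`. -/
def invisibleSet (F : Polynomial ℤ) (N : ℕ) : Set (ℤ × ℤ) :=
  {p | 1 ≤ p.1 ∧ p.1 ≤ (N : ℤ) ∧ 1 ≤ p.2 ∧ p.2 ≤ (N : ℤ) ∧ ¬ VisibleAlong F p.1 p.2}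

/-- The polynomial `G_{s,r}(x,y) = s·f(y) − r·f(x)`, viewed with real coefficients
as a polynomial in the two variables `X 0 = x` and `X 1 = y`. -/
noncomputable def Gpoly (f : Polynomial ℤ) (s r : ℤ) : MvPolynomial (Fin 2) ℝ :=
  (s : MvPolynomial (Fin 2) ℝ) * Polynomial.aeval (MvPolynomial.X 1) f -
    (r : MvPolynomial (Fin 2) ℝ) * Polynomial.aeval (MvPolynomial.X 0) f

/-!
One may take `δ = 2`. A factor of degree one of `G_{s,r}` yields `l, u` with
`s f(l x + u) = r f(x)`; then `x ↦ l x + u` permutes the roots of `f` while contracting distances,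
which is impossible for a finite set with at least two points.

For the count, let `(a, h)` be invisible along `f ^ m` with `a` large. Then some `1 ≤ u < a`
satisfies `|f(u)| / f(a) = r / s < 1` in lowest terms, and `s ^ m ∣ h`, hence `s ^ 2 ∣ h`. After a
translation `f` has no term of degree `d - 1`, so the solutions of `s f(u) = r f(a)` lie within
`O(1 / (α a))` of a line of slope `α = (r / s) ^ (1 / d)`. Lattice points that close to a line are
collinear on intervals of length of order `α √N` when `a ≥ √N`, and by the first part a line
carries at most `d` solutions. So there are `O(√N √(s / r))` abscissae `a ∈ [√N, N]` for each
`(s, r)`, each with at most `N / s ^ 2` ordinates, and summing over `r < s ≤ N` gives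
`O(N ^ (3 / 2) log N)`.
-/

open scoped NNReal

section RootSets

lemma one_le_of_lipschitzOnWith_of_injOn_of_mapsTo {E : Type*} [MetricSpace E] {S : Set E}
    {φ : E → E} {K : ℝ≥0} (hfin : S.Finite) (hnontriv : S.Nontrivial)
    (hlip : LipschitzOnWith K φ S) (hinj : S.InjOn φ) (hmaps : S.MapsTo φ S) : 1 ≤ K := by
  obtain ⟨⟨x, y⟩, hxy, hmin⟩ :=
    S.offDiag.exists_min_image (fun q ↦ dist q.1 q.2) hfin.offDiag hnontriv.offDiag_nonempty
  obtain ⟨hx, hy, hne⟩ := Set.mem_offDiag.mp hxy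
  have hclosest : dist x y ≤ dist (φ x) (φ y) :=
    hmin (φ x, φ y) ⟨hmaps hx, hmaps hy, fun h ↦ hne (hinj hx hy h)⟩
  have hcontract : dist x y ≤ K * dist x y := hclosest.trans (hlip.dist_le_mul x hx y hy)
  exact_mod_cast le_of_mul_le_mul_right ((one_mul _).trans_le hcontract) (dist_pos.mpr hne)

lemma two_le_natDegree_of_nontrivial_rootSet {R K : Type*} [CommRing R] [CommRing K] [IsDomain K]
    [Algebra R K] {p : R[X]} (hroots : (p.rootSet K).Nontrivial) : 2 ≤ p.natDegree :=
  ((Set.one_lt_ncard_iff_nontrivial_and_finite.mpr ⟨hroots, p.rootSet_finite K⟩).trans_le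
    (p.ncard_rootSet_le K))

-- Otherwise `x ↦ l * x + u` maps the roots of `p` injectively to roots of `p`, and comparing
-- leading coefficients gives `l ^ deg p = c`, so that it is a contraction.
lemma comp_linear_ne_C_mul {𝕜 : Type*} [NormedField 𝕜] {p : 𝕜[X]}
    (hroots : (p.rootSet 𝕜).Nontrivial) {c : 𝕜} (hc0 : c ≠ 0) (hc1 : ‖c‖ < 1) (l u : 𝕜) :
    p.comp (C l * X + C u) ≠ C c * p := by
  intro heq
  have hdeg := two_le_natDegree_of_nontrivial_rootSet hroots
  have hp : p ≠ 0 := ne_zero_of_natDegree_gt hdeg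
  have hl : l ≠ 0 := by
    rintro rfl
    have := congrArg natDegree heq
    simp only [C_0, zero_mul, zero_add, comp_C, natDegree_C, natDegree_C_mul hc0] at this
    lia
  have hpow : l ^ p.natDegree = c := by
    have := congrArg leadingCoeff heq
    rw [leadingCoeff_comp (by rw [natDegree_linear hl]; simp), leadingCoeff_linear hl,
      leadingCoeff_mul, leadingCoeff_C, mul_comm] at this
    exact mul_right_cancel₀ (leadingCoeff_ne_zero.mpr hp) this
  have hl1 : ‖l‖ < 1 := by
    rwa [← hpow, norm_pow, pow_lt_one_iff_of_nonneg (norm_nonneg l) (by lia)] at hc1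
  refine hl1.not_ge (one_le_of_lipschitzOnWith_of_injOn_of_mapsTo (K := ‖l‖₊)
    (φ := fun z ↦ l * z + u) (p.rootSet_finite 𝕜) hroots ?_ ?_ ?_)
  · refine LipschitzOnWith.of_dist_le_mul fun x _ y _ ↦ ?_
    rw [dist_add_right, dist_eq_norm, dist_eq_norm, ← mul_sub, norm_mul, coe_nnnorm]
  · exact fun x _ y _ h ↦ mul_left_cancel₀ hl (add_right_cancel h)
  · intro z hz
    have hz0 : p.eval z = 0 := by simpa using (mem_rootSet.mp hz).2
    have := congrArg (eval z) heq
    rw [eval_comp, eval_mul, hz0, mul_zero] at this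
    simpa [mem_rootSet, hp] using this

lemma C_mul_comp_linear_sub_C_mul_ne_zero {f : ℤ[X]} (hroots : (f.rootSet ℂ).Nontrivial)
    {s r : ℤ} (hr : 0 < r) (hrs : r < s) (l u : ℂ) :
    C (s : ℂ) * (f.map (Int.castRingHom ℂ)).comp (C l * X + C u) -
      C (r : ℂ) * f.map (Int.castRingHom ℂ) ≠ 0 := by
  have hs0 : (s : ℂ) ≠ 0 := by exact_mod_cast (hr.trans hrs).ne'
  have hr0 : (r : ℂ) ≠ 0 := by exact_mod_cast hr.ne'
  have hratio : ‖(r / s : ℂ)‖ < 1 := by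
    rw [norm_div, Complex.norm_intCast, Complex.norm_intCast, ← Int.cast_abs, ← Int.cast_abs,
      abs_of_pos hr, abs_of_pos (hr.trans hrs), div_lt_one (by exact_mod_cast hr.trans hrs)]
    exact_mod_cast hrs
  have hroots' : ((f.map (Int.castRingHom ℂ)).rootSet ℂ).Nontrivial := by
    rwa [rootSet, ← algebraMap_int_eq, aroots_map]
  intro h
  refine comp_linear_ne_C_mul hroots' (div_ne_zero hr0 hs0) hratio l u ?_
  apply mul_left_cancel₀ (C_ne_zero.mpr hs0)
  rw [sub_eq_zero.mp h, ← mul_assoc, ← C_mul, mul_div_cancel₀ _ hs0]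

lemma nontrivial_rootSet_complex_of_isAlgebraic {K : Type*} [Field K] [Algebra ℚ K]
    [Algebra.IsAlgebraic ℚ K] {f : ℤ[X]} (hroots : (f.rootSet K).Nontrivial) :
    (f.rootSet ℂ).Nontrivial := by
  let φ : K →ₐ[ℚ] ℂ := IsAlgClosed.lift
  exact (hroots.image φ.injective).mono (rootSet_mapsTo (φ.restrictScalars ℤ)).image_subset

lemma nontrivial_rootSet_complex {f : ℤ[X]} (hf : f ≠ 0)
    (hroots : ∃ α β : AlgebraicClosure ℚ, α ≠ β ∧ aeval α f = 0 ∧ aeval β f = 0) :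
    (f.rootSet ℂ).Nontrivial := by
  obtain ⟨α, β, hαβ, hα, hβ⟩ := hroots
  exact @nontrivial_rootSet_complex_of_isAlgebraic _ _ (AlgebraicClosure.instAlgebra ℚ) _ _
    ⟨α, mem_rootSet.mpr ⟨hf, hα⟩, β, mem_rootSet.mpr ⟨hf, hβ⟩, hαβ⟩

end RootSets

section FactorsOfGpoly

lemma eq_C_add_sum_C_mul_X_of_totalDegree_le_one {σ R : Type*} [Fintype σ] [CommSemiring R]
    {g : MvPolynomial σ R} (hg : g.totalDegree ≤ 1) :
    g = MvPolynomial.C (g.coeff 0) +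
      ∑ i, MvPolynomial.C (g.coeff (Finsupp.single i 1)) * MvPolynomial.X i := by
  classical
  ext n
  simp only [MvPolynomial.coeff_add, MvPolynomial.coeff_C, MvPolynomial.coeff_sum,
    MvPolynomial.coeff_C_mul, MvPolynomial.coeff_X]
  rcases lt_trichotomy n.degree 1 with hn | hn | hn
  · obtain rfl : n = 0 := (Finsupp.degree_eq_zero_iff n).mp (Nat.lt_one_iff.mp hn)
    simp
  · obtain ⟨i, rfl⟩ : n ∈ Set.range fun i : σ ↦ Finsupp.single i 1 := by
      rwa [Finsupp.range_single_one]
    simp [Finsupp.single_left_inj, eq_comm]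
  · rw [MvPolynomial.coeff_eq_zero_of_totalDegree_lt (hg.trans_lt hn),
      if_neg (by rintro rfl; simp at hn), zero_add]
    refine (Finset.sum_eq_zero fun i _ ↦ ?_).symm
    rw [if_neg (by rintro rfl; simp at hn), mul_zero]

lemma exists_line_of_irreducible_of_totalDegree_le_one {K L : Type*} [Field K] [Field L]
    [Algebra K L] {g : MvPolynomial (Fin 2) K} (hirr : Irreducible g) (hg : g.totalDegree ≤ 1) :
    (∃ l u : L, MvPolynomial.aeval ![X, C l * X + C u] g = 0) ∨
      ∃ u : L, MvPolynomial.aeval ![C u, X] g = 0 := by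
  obtain ⟨a, b, c, rfl⟩ : ∃ a b c : K, g = MvPolynomial.C a +
      (MvPolynomial.C b * MvPolynomial.X 0 + MvPolynomial.C c * MvPolynomial.X 1) :=
    ⟨_, _, _, by simpa using eq_C_add_sum_C_mul_X_of_totalDegree_le_one hg⟩
  have hC (y z : K) (hz : z ≠ 0) : C (algebraMap K L z) * C (algebraMap K L (-y / z)) =
      -C (algebraMap K L y) := by
    rw [← C_mul, ← map_mul, mul_div_cancel₀ _ hz, map_neg, C_neg]
  have haeval (P Q : L[X]) : MvPolynomial.aeval ![P, Q] (MvPolynomial.C a +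
      (MvPolynomial.C b * MvPolynomial.X 0 + MvPolynomial.C c * MvPolynomial.X 1)) =
        C (algebraMap K L a) + (C (algebraMap K L b) * P + C (algebraMap K L c) * Q) := by
    simp
  rcases ne_or_eq c 0 with hc | rfl
  · refine .inl ⟨algebraMap K L (-b / c), algebraMap K L (-a / c), ?_⟩
    rw [haeval]
    linear_combination X * hC b c hc + hC a c hc
  rcases ne_or_eq b 0 with hb | rfl
  · refine .inr ⟨algebraMap K L (-a / b), ?_⟩
    rw [haeval, map_zero, C_0]
    linear_combination hC a b hb
  · simp only [map_zero, zero_mul, add_zero] at hirr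
    have ha : a ≠ 0 := by simpa using hirr.ne_zero
    exact absurd (ha.isUnit.map MvPolynomial.C) hirr.not_isUnit

lemma aeval_Gpoly {A : Type*} [CommRing A] [Algebra ℝ A] (f : ℤ[X]) (s r : ℤ) (P Q : A[X]) :
    MvPolynomial.aeval ![P, Q] (Gpoly f s r) =
      C (s : A) * (f.map (Int.castRingHom A)).comp Q -
        C (r : A) * (f.map (Int.castRingHom A)).comp P := by
  have haeval (i : Fin 2) : MvPolynomial.aeval ![P, Q]
      (aeval (MvPolynomial.X i : MvPolynomial (Fin 2) ℝ) f) =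
        (f.map (Int.castRingHom A)).comp (![P, Q] i) := by
    rw [aeval_def, ← AlgHom.coe_toRingHom, hom_eval₂, comp, eval₂_map]
    congr 1
    · exact RingHom.ext_int _ _
    · simp
  simp [Gpoly, haeval]

lemma two_le_totalDegree_of_irreducible_of_dvd_Gpoly {f : ℤ[X]}
    (hroots : (f.rootSet ℂ).Nontrivial) {s r : ℤ} (hr : 0 < r) (hrs : r < s)
    {g : MvPolynomial (Fin 2) ℝ} (hirr : Irreducible g) (hdvd : g ∣ Gpoly f s r) :
    2 ≤ g.totalDegree := by
  have hvanish (P Q : ℂ[X]) (h : MvPolynomial.aeval ![P, Q] g = 0) :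
      C (s : ℂ) * (f.map (Int.castRingHom ℂ)).comp Q -
        C (r : ℂ) * (f.map (Int.castRingHom ℂ)).comp P = 0 := by
    have hG := zero_dvd_iff.mp (h ▸ map_dvd (MvPolynomial.aeval ![P, Q]) hdvd)
    rwa [aeval_Gpoly] at hG
  by_contra! hlt
  obtain ⟨l, u, hline⟩ | ⟨u, hline⟩ :=
    exists_line_of_irreducible_of_totalDegree_le_one (L := ℂ) hirr (Nat.le_of_lt_succ hlt)
  · have hG := hvanish _ _ hline
    rw [comp_X] at hG
    exact C_mul_comp_linear_sub_C_mul_ne_zero hroots hr hrs l u hG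
  · have hdeg := congrArg natDegree (sub_eq_zero.mp (hvanish _ _ hline))
    rw [comp_X, comp_C, ← C_mul, natDegree_C,
      natDegree_C_mul (by exact_mod_cast (hr.trans hrs).ne'),
      natDegree_map_eq_of_injective (RingHom.injective_int _)] at hdeg
    have := two_le_natDegree_of_nontrivial_rootSet hroots
    lia

end FactorsOfGpoly

section NearLine

lemma exists_taylor_coeff_eq_zero {K : Type*} [Field K] [CharZero K] {p : K[X]} {n : ℕ}
    (hdeg : p.natDegree = n + 1) : ∃ b : K, (taylor b p).coeff n = 0 := by
  have hlead : p.coeff (n + 1) ≠ 0 := by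
    rw [← hdeg, coeff_natDegree, leadingCoeff_ne_zero]
    exact ne_zero_of_natDegree_gt (n := 0) (by lia)
  refine ⟨-(p.coeff n / ((n + 1) * p.coeff (n + 1))), ?_⟩
  have hhasse : (hasseDeriv n p).natDegree < 2 := by
    have := natDegree_hasseDeriv_le p n
    lia
  have hn : (n : K) + 1 ≠ 0 := Nat.cast_add_one_ne_zero n
  rw [taylor_coeff, eval_eq_sum_range' hhasse]
  simp only [Finset.sum_range_succ, Finset.sum_range_zero, hasseDeriv_coeff, zero_add,
    Nat.choose_self, add_comm 1 n, Nat.choose_succ_self_right]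
  push_cast
  field_simp
  ring

lemma abs_eval_le_sum_abs_coeff_mul_pow {p : ℝ[X]} {n : ℕ} (hdeg : p.natDegree ≤ n) {t : ℝ}
    (ht : 1 ≤ t) : |p.eval t| ≤ (∑ i ∈ Finset.range (n + 1), |p.coeff i|) * t ^ n := by
  rw [eval_eq_sum_range' (Nat.lt_succ_of_le hdeg), Finset.sum_mul]
  refine (Finset.abs_sum_le_sum_abs _ _).trans (Finset.sum_le_sum fun i hi ↦ ?_)
  rw [abs_mul, abs_of_nonneg (by positivity : 0 ≤ t ^ i)]
  gcongr
  exact Nat.lt_succ_iff.mp (Finset.mem_range.mp hi)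

lemma exists_shift_abs_eval_sub_leadingCoeff_mul_pow_le {p : ℝ[X]} {n : ℕ}
    (hdeg : p.natDegree = n + 2) :
    ∃ b K : ℝ, 0 < K ∧ ∀ t : ℝ, 1 ≤ t →
      |p.eval (t + b) - p.leadingCoeff * t ^ (n + 2)| ≤ K * t ^ n := by
  obtain ⟨b, hb⟩ := exists_taylor_coeff_eq_zero hdeg
  set q := taylor b p with hq
  have hqdeg : q.natDegree = n + 2 := by rw [hq, natDegree_taylor, hdeg]
  have herase : q.eraseLead.natDegree ≤ n := by
    refine natDegree_le_iff_coeff_eq_zero.mpr fun i hi ↦ ?_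
    rcases eq_or_ne i (n + 2) with rfl | hi2
    · rw [← hqdeg, eraseLead_coeff_natDegree]
    rw [eraseLead_coeff_of_ne i (hqdeg ▸ hi2)]
    rcases eq_or_ne i (n + 1) with rfl | hi1
    · exact hb
    · exact coeff_eq_zero_of_natDegree_lt (by lia)
  refine ⟨b, (∑ i ∈ Finset.range (n + 1), |q.eraseLead.coeff i|) + 1, by positivity,
    fun t ht ↦ ?_⟩
  have hsplit : p.eval (t + b) - p.leadingCoeff * t ^ (n + 2) = q.eraseLead.eval t := by
    have := congrArg (eval t) q.eraseLead_add_C_mul_X_pow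
    rw [hqdeg, hq, leadingCoeff_taylor, ← hq] at this
    simp only [eval_add, eval_mul, eval_C, eval_pow, eval_X] at this
    rw [← taylor_eval, ← hq, ← this, add_sub_cancel_right]
  rw [hsplit]
  refine (abs_eval_le_sum_abs_coeff_mul_pow herase ht).trans ?_
  gcongr
  exact (lt_add_one _).le

lemma abs_sub_mul_max_pow_le_abs_pow_sub_pow (n : ℕ) {y z : ℝ} (hy : 0 ≤ y) (hz : 0 ≤ z) :
    |y - z| * max y z ^ n ≤ |y ^ (n + 1) - z ^ (n + 1)| := by
  wlog hzy : z ≤ y generalizing y z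
  · rw [abs_sub_comm, max_comm, abs_sub_comm (y ^ _)]
    exact this hz hy (le_of_not_ge hzy)
  have hpow : z ^ (n + 1) ≤ y ^ (n + 1) := by gcongr
  have hmixed : z * z ^ n ≤ z * y ^ n := by gcongr
  rw [max_eq_left hzy, abs_of_nonneg (sub_nonneg.mpr hzy), abs_of_nonneg (sub_nonneg.mpr hpow),
    pow_succ', pow_succ', sub_mul]
  linarith

lemma mul_abs_sub_mul_max_le_of_approx_pow {φ : ℝ → ℝ} {a K : ℝ} {n : ℕ} (ha : 0 ≤ a)
    (hφ : ∀ t, 1 ≤ t → |φ t - a * t ^ (n + 2)| ≤ K * t ^ n) {α x y : ℝ} (hα : 0 < α)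
    (hα1 : α ≤ 1) (hx : 1 ≤ x) (hy : 1 ≤ y) (heq : φ y = α ^ (n + 2) * φ x) :
    a * |y - α * x| * max y (α * x) ≤ 2 * K := by
  have hK : 0 ≤ K := by simpa using (abs_nonneg _).trans (hφ 1 le_rfl)
  set z := α * x with hz
  set M := max y z
  have hz0 : 0 < z := by positivity
  have hM0 : 0 < M := hz0.trans_le (le_max_right _ _)
  have hyM : |φ y - a * y ^ (n + 2)| ≤ K * M ^ n := by
    refine (hφ y hy).trans ?_
    gcongr
    exact le_max_left _ _
  have hzM : |φ y - a * z ^ (n + 2)| ≤ K * M ^ n := by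
    calc |φ y - a * z ^ (n + 2)| = α ^ (n + 2) * |φ x - a * x ^ (n + 2)| := by
          rw [heq, hz, mul_pow, ← abs_of_pos (by positivity : 0 < α ^ (n + 2)), ← abs_mul,
            abs_of_pos (by positivity : 0 < α ^ (n + 2))]
          ring_nf
      _ ≤ α ^ (n + 2) * (K * x ^ n) := by gcongr; exact hφ x hx
      _ = α ^ 2 * (K * z ^ n) := by rw [hz, mul_pow]; ring
      _ ≤ 1 * (K * M ^ n) := by
          gcongr
          · exact pow_le_one₀ hα.le hα1
          · exact le_max_right _ _
      _ = K * M ^ n := one_mul _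
  refine le_of_mul_le_mul_right ?_ (pow_pos hM0 n)
  calc a * |y - z| * M * M ^ n = a * (|y - z| * M ^ (n + 1)) := by ring
    _ ≤ a * |y ^ (n + 2) - z ^ (n + 2)| := by
        gcongr
        exact abs_sub_mul_max_pow_le_abs_pow_sub_pow (n + 1) (by linarith) hz0.le
    _ = |(φ y - a * z ^ (n + 2)) - (φ y - a * y ^ (n + 2))| := by
        rw [← abs_of_nonneg ha, ← abs_mul, abs_of_nonneg ha]
        ring_nf
    _ ≤ K * M ^ n + K * M ^ n := (abs_sub _ _).trans (add_le_add hzM hyM)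
    _ = 2 * K * M ^ n := by ring

lemma exists_abs_sub_line_le {p : ℝ[X]} (hdeg : 2 ≤ p.natDegree) (hlead : 0 < p.leadingCoeff) :
    ∃ b W U : ℝ, 0 < W ∧ 1 ≤ U ∧ ∀ α x y : ℝ, 0 < α → α ≤ 1 → U ≤ x → U ≤ y →
      p.eval y = α ^ p.natDegree * p.eval x → |(y - b) - α * (x - b)| ≤ W / (α * x) := by
  obtain ⟨n, hn⟩ : ∃ n, p.natDegree = n + 2 := Nat.exists_eq_add_of_le' hdeg
  obtain ⟨b, K, hK, happrox⟩ := exists_shift_abs_eval_sub_leadingCoeff_mul_pow_le hn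
  refine ⟨b, 4 * K / p.leadingCoeff, 2 * |b| + 2, by positivity,
    by linarith [abs_nonneg b], ?_⟩
  intro α x y hα hα1 hx hy heq
  have hb := le_abs_self b
  have hb0 := abs_nonneg b
  have hgap := mul_abs_sub_mul_max_le_of_approx_pow hlead.le happrox hα hα1
    (x := x - b) (y := y - b) (by linarith) (by linarith)
    (by rw [sub_add_cancel, sub_add_cancel, heq, hn])
  have hx0 : 0 < x := by linarith
  have hmax : α * x ≤ 2 * max (y - b) (α * (x - b)) := by
    have : α * x ≤ 2 * (α * (x - b)) := by nlinarith
    exact this.trans (by gcongr; exact le_max_right _ _)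
  rw [le_div_iff₀ (by positivity), le_div_iff₀ hlead]
  calc |(y - b) - α * (x - b)| * (α * x) * p.leadingCoeff
      ≤ |(y - b) - α * (x - b)| * (2 * max (y - b) (α * (x - b))) * p.leadingCoeff := by gcongr
    _ ≤ 4 * K := by linarith

end NearLine

section LatticePointsNearLine

lemma exists_line_of_forall_det_eq_zero {T : Finset ℤ} {y : ℤ → ℤ}
    (hdet : ∀ p ∈ T, ∀ q ∈ T, ∀ x ∈ T, (q - p) * (y x - y p) = (x - p) * (y q - y p)) :
    ∃ l u : ℚ, ∀ x ∈ T, (y x : ℚ) = l * x + u := by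
  rcases T.eq_empty_or_nonempty with rfl | ⟨p, hp⟩
  · simp
  by_cases hsingle : ∀ q ∈ T, q = p
  · exact ⟨0, y p, fun x hx ↦ by rw [hsingle x hx, zero_mul, zero_add]⟩
  push Not at hsingle
  obtain ⟨q, hq, hqp⟩ := hsingle
  have hqp' : (q : ℚ) - p ≠ 0 := sub_ne_zero.mpr (by exact_mod_cast hqp)
  refine ⟨(y q - y p) / (q - p), y p - (y q - y p) / (q - p) * p, fun x hx ↦ ?_⟩
  have hdetx : ((q : ℚ) - p) * (y x - y p) = (x - p) * (y q - y p) := by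
    exact_mod_cast hdet p hp q hq x hx
  field_simp
  linear_combination hdetx

lemma det_eq_zero_of_abs_sub_line_le {y : ℤ → ℤ} {α β w : ℝ} {p q x : ℤ}
    (hp : |(y p : ℝ) - (α * p + β)| ≤ w) (hq : |(y q : ℝ) - (α * q + β)| ≤ w)
    (hx : |(y x : ℝ) - (α * x + β)| ≤ w) (hqp : 4 * w * |(q - p : ℝ)| < 1)
    (hxp : 4 * w * |(x - p : ℝ)| < 1) :
    (q - p) * (y x - y p) = (x - p) * (y q - y p) := by
  set E : ℤ → ℝ := fun a ↦ y a - (α * a + β) with hE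
  have hbound : ∀ {c e : ℤ}, |E e| ≤ w → 4 * w * |(c - p : ℝ)| < 1 →
      |(c - p : ℝ) * (E e - E p)| < 1 / 2 := fun {c e} he hc ↦ by
    have hsub : |E e - E p| ≤ 2 * w := (abs_sub _ _).trans (by linarith)
    calc |(c - p : ℝ) * (E e - E p)| ≤ |(c - p : ℝ)| * (2 * w) := by rw [abs_mul]; gcongr
      _ < 1 / 2 := by linarith
  have hdet : (((q - p) * (y x - y p) - (x - p) * (y q - y p) : ℤ) : ℝ)
      = (q - p) * (E x - E p) - (x - p) * (E q - E p) := by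
    simp only [hE]
    push_cast
    ring
  have hlt : |(((q - p) * (y x - y p) - (x - p) * (y q - y p) : ℤ) : ℝ)| < 1 := by
    rw [hdet]
    exact (abs_sub _ _).trans_lt (by linarith [hbound hx hqp, hbound hq hxp])
  exact sub_eq_zero.mp (Int.abs_lt_one_iff.mp (by exact_mod_cast hlt))

-- Three lattice points within `w` of a line, with abscissae less than `1 / (4 * w)` apart, span a
-- triangle of area less than `1 / 2`, so they are collinear.
lemma card_le_of_abs_sub_line_le {S : Finset ℤ} {N : ℕ} (hS : ∀ a ∈ S, 0 ≤ a ∧ a ≤ N)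
    {y : ℤ → ℤ} {α β w : ℝ} (hw : 0 < w) (hy : ∀ a ∈ S, |(y a : ℝ) - (α * a + β)| ≤ w) {D : ℕ}
    (hline : ∀ T ⊆ S, ∀ l u : ℚ, (∀ x ∈ T, (y x : ℚ) = l * x + u) → T.card ≤ D) :
    (S.card : ℝ) ≤ D * (4 * w * N + 1) := by
  set block : ℤ → ℤ := fun a ↦ ⌊4 * w * a⌋
  have hclose : ∀ {k a c : ℤ}, a ∈ S.filter (block · = k) → c ∈ S.filter (block · = k) →
      4 * w * |(a - c : ℝ)| < 1 := fun {k a c} ha hc ↦ by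
    have hfloor : block a = block c :=
      (Finset.mem_filter.mp ha).2.trans (Finset.mem_filter.mp hc).2.symm
    have hlt := Int.abs_sub_lt_one_of_floor_eq_floor hfloor
    rwa [← mul_sub, abs_mul, abs_of_pos (by positivity)] at hlt
  have hfiber : ∀ k ∈ S.image block, (S.filter (block · = k)).card ≤ D := fun k _ ↦ by
    have hmem : ∀ {a}, a ∈ S.filter (block · = k) → |(y a : ℝ) - (α * a + β)| ≤ w :=
      fun ha ↦ hy _ (Finset.mem_filter.mp ha).1
    obtain ⟨l, u, hlu⟩ := exists_line_of_forall_det_eq_zero fun p hp q hq x hx ↦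
      det_eq_zero_of_abs_sub_line_le (hmem hp) (hmem hq) (hmem hx) (hclose hq hp) (hclose hx hp)
    exact hline _ (Finset.filter_subset _ _) l u hlu
  have himage : ((S.image block).card : ℝ) ≤ 4 * w * N + 1 := by
    have hsub : S.image block ⊆ Finset.Icc 0 ⌊4 * w * N⌋ := by
      refine Finset.image_subset_iff.mpr fun a ha ↦ ?_
      have ha0 : (0 : ℝ) ≤ a := by exact_mod_cast (hS a ha).1
      have haN : (a : ℝ) ≤ N := by exact_mod_cast (hS a ha).2
      exact Finset.mem_Icc.mpr
        ⟨Int.floor_nonneg.mpr (by positivity), Int.floor_le_floor (by gcongr)⟩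
    have hcard : ((Finset.Icc 0 ⌊4 * w * N⌋).card : ℤ) = ⌊4 * w * N⌋ + 1 - 0 :=
      Int.card_Icc_of_le _ _ (by positivity)
    calc ((S.image block).card : ℝ) ≤ (Finset.Icc 0 ⌊4 * w * N⌋).card := by
          exact_mod_cast Finset.card_le_card hsub
      _ = ⌊4 * w * N⌋ + 1 := by rw [sub_zero] at hcard; exact_mod_cast hcard
      _ ≤ 4 * w * N + 1 := by gcongr; exact Int.floor_le _
  calc (S.card : ℝ) ≤ D * (S.image block).card := by
        exact_mod_cast Finset.card_le_mul_card_image S D hfiber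
    _ ≤ D * (4 * w * N + 1) := by gcongr

lemma card_le_natDegree_of_line {f : ℤ[X]} (hroots : (f.rootSet ℂ).Nontrivial) {s r : ℤ}
    (hr : 0 < r) (hrs : r < s) {T : Finset ℤ} {y : ℤ → ℤ}
    (hy : ∀ x ∈ T, s * f.eval (y x) = r * f.eval x) {l u : ℚ}
    (hline : ∀ x ∈ T, (y x : ℚ) = l * x + u) : T.card ≤ f.natDegree := by
  set g : ℂ[X] := f.map (Int.castRingHom ℂ)
  set P : ℂ[X] := C (s : ℂ) * g.comp (C (l : ℂ) * X + C (u : ℂ)) - C (r : ℂ) * g with hP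
  have hP0 : P ≠ 0 := C_mul_comp_linear_sub_C_mul_ne_zero hroots hr hrs l u
  have hgdeg : g.natDegree ≤ f.natDegree := natDegree_map_le
  have hPdeg : P.natDegree ≤ f.natDegree := by
    refine (natDegree_sub_le _ _).trans (max_le ?_ ((natDegree_C_mul_le _ _).trans hgdeg))
    refine (natDegree_C_mul_le _ _).trans (natDegree_comp_le.trans ?_)
    calc g.natDegree * (C (l : ℂ) * X + C (u : ℂ)).natDegree ≤ f.natDegree * 1 :=
          Nat.mul_le_mul hgdeg natDegree_linear_le
      _ = f.natDegree := mul_one _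
  have hgeval : ∀ z : ℤ, g.eval (z : ℂ) = f.eval z := eval_intCast_map (Int.castRingHom ℂ) f
  have hroot : ∀ x ∈ T, P.eval (x : ℂ) = 0 := fun x hx ↦ by
    have hlinex : (l : ℂ) * x + u = y x := by exact_mod_cast (hline x hx).symm
    simp only [hP, eval_sub, eval_mul, eval_C, eval_comp, eval_add, eval_X, hlinex, hgeval]
    exact sub_eq_zero.mpr (by exact_mod_cast hy x hx)
  by_contra! hcard
  refine hP0 (eq_zero_of_natDegree_lt_card_of_eval_eq_zero P
    (Int.cast_injective.comp Subtype.val_injective) (fun x : T ↦ hroot x x.2) ?_)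
  rw [Fintype.card_coe]
  exact hPdeg.trans_lt hcard

end LatticePointsNearLine

section Growth

lemma eventually_eval_pos {p : ℝ[X]} (hlead : 0 < p.leadingCoeff) :
    ∀ᶠ x in atTop, 0 < p.eval x :=
  p.isEquivalent_atTop_lead.eventually_pos <|
    (eventually_gt_atTop 0).mono fun _ hx ↦ by positivity

lemma exists_strictMonoOn_Ici_eval {p : ℝ[X]} (hdeg : 0 < p.natDegree)
    (hlead : 0 < p.leadingCoeff) : ∃ M : ℝ, StrictMonoOn (fun x ↦ p.eval x) (Set.Ici M) := by
  have hderiv : 0 < p.derivative.leadingCoeff := by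
    rw [leadingCoeff_derivative]
    positivity
  obtain ⟨M, hM⟩ := eventually_atTop.mp (eventually_eval_pos hderiv)
  refine ⟨M, strictMonoOn_of_deriv_pos (convex_Ici M) p.continuous.continuousOn fun x hx ↦ ?_⟩
  rw [interior_Ici] at hx
  rw [Polynomial.deriv]
  exact hM x (le_of_lt hx)

lemma eventually_forall_abs_lt_of_strictMonoOn {F : ℤ → ℤ} (htop : Tendsto F atTop atTop) {M : ℤ}
    (hmono : StrictMonoOn F (Set.Ici M)) :
    ∀ᶠ a in atTop, ∀ u ∈ Set.Ico 1 a, |F u| < F a := by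
  have hsmall : ∀ᶠ a in atTop, ∀ u ∈ Set.Icc 1 M, |F u| < F a :=
    (Set.finite_Icc 1 M).eventually_all.mpr fun u _ ↦ htop.eventually_gt_atTop |F u|
  filter_upwards [hsmall, eventually_ge_atTop M, htop.eventually_gt_atTop (-F M)]
    with a hsmall hMa hFa u hu
  rcases le_total u M with huM | hMu
  · exact hsmall u ⟨hu.1, huM⟩
  · have hlow : F M ≤ F u := hmono.monotoneOn Set.self_mem_Ici hMu hMu
    have hupp : F u < F a := hmono hMu hMa hu.2
    exact abs_lt.mpr ⟨by linarith, hupp⟩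

lemma leadingCoeff_map_castRingHom_real_pos {f : ℤ[X]} (hlead : 0 < f.leadingCoeff) :
    0 < (f.map (Int.castRingHom ℝ)).leadingCoeff := by
  rw [leadingCoeff_map_of_injective (Int.castRingHom ℝ).injective_int]
  exact Int.cast_pos.mpr hlead

lemma tendsto_eval_int_atTop {f : ℤ[X]} (hdeg : 0 < f.natDegree) (hlead : 0 < f.leadingCoeff) :
    Tendsto (fun a : ℤ ↦ f.eval a) atTop atTop := by
  have hreal := tendsto_atTop_of_leadingCoeff_nonneg (f.map (Int.castRingHom ℝ))
    (by rwa [degree_map_eq_of_injective (Int.castRingHom ℝ).injective_int,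
      ← natDegree_pos_iff_degree_pos]) (leadingCoeff_map_castRingHom_real_pos hlead).le
  refine tendsto_intCast_atTop_iff.mp ((hreal.comp tendsto_intCast_atTop_atTop).congr fun a ↦ ?_)
  exact eval_intCast_map (Int.castRingHom ℝ) f a

lemma eventually_forall_abs_eval_lt {f : ℤ[X]} (hdeg : 0 < f.natDegree)
    (hlead : 0 < f.leadingCoeff) :
    ∀ᶠ a : ℤ in atTop, ∀ u ∈ Set.Ico 1 a, |f.eval u| < f.eval a := by
  obtain ⟨M, hM⟩ := exists_strictMonoOn_Ici_eval
    (p := f.map (Int.castRingHom ℝ))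
    (by rwa [natDegree_map_eq_of_injective (Int.castRingHom ℝ).injective_int])
    (leadingCoeff_map_castRingHom_real_pos hlead)
  refine eventually_forall_abs_lt_of_strictMonoOn (M := ⌈M⌉) (tendsto_eval_int_atTop hdeg hlead)
    fun a ha c hc hac ↦ ?_
  have hlt := hM (Int.ceil_le.mp ha) (Int.ceil_le.mp hc) (Int.cast_lt.mpr hac)
  simp only [eval_intCast_map, eq_intCast, Int.cast_id] at hlt
  exact_mod_cast hlt

end Growth

section ValueRatios

/-- The integers `a` whose value `f a` is, up to sign, `s / r` times the value of `f` at some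
smaller positive integer. -/
def valueRatioSet (f : ℤ[X]) (s r : ℤ) : Set ℤ :=
  {a | ∃ u ∈ Set.Ico 1 a, s * |f.eval u| = r * f.eval a}

lemma exists_pow_eq_div {d : ℕ} (hd : 2 ≤ d) {r s : ℝ} (hr : 0 < r) (hrs : r ≤ s) :
    ∃ α : ℝ, 0 < α ∧ α ≤ 1 ∧ α ^ d = r / s ∧ α⁻¹ ≤ √(s / r) := by
  have hs : 0 < s := hr.trans_le hrs
  have hle : r / s ≤ 1 := (div_le_one hs).mpr hrs
  set α := (r / s) ^ ((d : ℝ)⁻¹)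
  have hα : 0 < α := by positivity
  have hα1 : α ≤ 1 := Real.rpow_le_one (by positivity) hle (by positivity)
  have hpow : α ^ d = r / s := Real.rpow_inv_natCast_pow (by positivity) (by lia)
  refine ⟨α, hα, hα1, hpow, Real.le_sqrt_of_sq_le ?_⟩
  rw [inv_pow, ← inv_div r s, ← hpow]
  exact inv_anti₀ (by positivity) (pow_le_pow_of_le_one hα.le hα1 hd)

lemma exists_abs_sub_line_le_of_eval_eq {f : ℤ[X]} (hdeg : 2 ≤ f.natDegree)
    (hlead : 0 < f.leadingCoeff) :
    ∃ b W U : ℝ, 0 < W ∧ 1 ≤ U ∧ ∀ s r : ℤ, 0 < r → r < s →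
      ∃ α : ℝ, 0 < α ∧ α ≤ 1 ∧ α⁻¹ ≤ √(s / r) ∧
        ∀ a u : ℤ, U ≤ u → u < a → s * f.eval u = r * f.eval a →
          |(u : ℝ) - (α * a + (b - α * b))| ≤ W / (α * a) := by
  set g := f.map (Int.castRingHom ℝ)
  have hgdeg : g.natDegree = f.natDegree :=
    natDegree_map_eq_of_injective (Int.castRingHom ℝ).injective_int f
  have hgeval : ∀ z : ℤ, g.eval (z : ℝ) = f.eval z := eval_intCast_map (Int.castRingHom ℝ) f
  obtain ⟨b, W, U, hW, hU, hnear⟩ := exists_abs_sub_line_le (hgdeg ▸ hdeg)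
    (leadingCoeff_map_castRingHom_real_pos hlead)
  refine ⟨b, W, U, hW, hU, fun s r hr hrs ↦ ?_⟩
  have hs : (s : ℝ) ≠ 0 := by exact_mod_cast (hr.trans hrs).ne'
  obtain ⟨α, hα, hα1, hpow, hinv⟩ := exists_pow_eq_div (r := r) (s := s) hdeg
    (by exact_mod_cast hr) (by exact_mod_cast hrs.le)
  refine ⟨α, hα, hα1, hinv, fun a u hUu hua heq ↦ ?_⟩
  have hgeq : g.eval (u : ℝ) = α ^ g.natDegree * g.eval (a : ℝ) := by
    rw [hgeval, hgeval, hgdeg, hpow, div_mul_eq_mul_div, eq_div_iff hs, mul_comm]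
    exact_mod_cast heq
  have hUa : U ≤ a := hUu.trans (Int.cast_le.mpr hua.le)
  calc |(u : ℝ) - (α * a + (b - α * b))| = |(u - b) - α * (a - b)| := by ring_nf
    _ ≤ W / (α * a) := hnear α a u hα hα1 hUa hUu hgeq

lemma exists_card_le_of_eval_eq {f : ℤ[X]} (hroots : (f.rootSet ℂ).Nontrivial)
    (hlead : 0 < f.leadingCoeff) :
    ∃ U : ℤ, ∃ K : ℝ, 0 < K ∧ ∀ N : ℕ, 0 < N → ∀ s r : ℤ, 0 < r → r < s → ∀ S : Finset ℤ,
      (∀ a ∈ S, a ≤ N ∧ N ≤ a ^ 2 ∧ ∃ u ∈ Set.Ico U a, s * f.eval u = r * f.eval a) →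
      (S.card : ℝ) ≤ K * (√N * √(s / r)) := by
  have hdeg : 2 ≤ f.natDegree := two_le_natDegree_of_nontrivial_rootSet hroots
  obtain ⟨b, W, U, hW, hU, hnear⟩ := exists_abs_sub_line_le_of_eval_eq hdeg hlead
  refine ⟨⌈U⌉, f.natDegree * (4 * W + 1), by positivity, fun N hN s r hr hrs S hS ↦ ?_⟩
  obtain ⟨α, hα, hα1, hinv, hnearα⟩ := hnear s r hr hrs
  have hN' : (1 : ℝ) ≤ N := by exact_mod_cast hN
  choose! y hyU hyeq using fun a ha ↦ (hS a ha).2.2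
  have hUy : ∀ a ∈ S, U ≤ y a := fun a ha ↦ Int.ceil_le.mp (hyU a ha).1
  have hpos : ∀ a ∈ S, (0 : ℝ) ≤ a := fun a ha ↦ by
    linarith [hUy a ha, (Int.cast_lt (R := ℝ)).mpr (hyU a ha).2]
  have hstrip : ∀ a ∈ S, |(y a : ℝ) - (α * a + (b - α * b))| ≤ W / (α * √N) := fun a ha ↦ by
    have hsqrt : √N ≤ (a : ℝ) :=
      Real.sqrt_le_iff.mpr ⟨hpos a ha, by exact_mod_cast (hS a ha).2.1⟩
    refine (hnearα a (y a) (hUy a ha) (hyU a ha).2 (hyeq a ha)).trans ?_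
    gcongr
  have hcard := card_le_of_abs_sub_line_le (N := N)
    (fun a ha ↦ ⟨by exact_mod_cast hpos a ha, (hS a ha).1⟩) (by positivity) hstrip
    fun T hT l u hline ↦
      card_le_natDegree_of_line hroots hr hrs (fun x hx ↦ hyeq x (hT hx)) hline
  have hone : 1 ≤ √(N : ℝ) * √(s / r) :=
    one_le_mul_of_one_le_of_one_le (Real.one_le_sqrt.mpr hN')
      (((one_le_inv₀ hα).mpr hα1).trans hinv)
  calc (S.card : ℝ) ≤ f.natDegree * (4 * (W / (α * √N)) * N + 1) := hcard
    _ = f.natDegree * (4 * W * (N / √N * α⁻¹) + 1) := by ring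
    _ = f.natDegree * (4 * W * (√N * α⁻¹) + 1) := by rw [Real.div_sqrt]
    _ ≤ f.natDegree * (4 * W * (√N * √(s / r)) + √N * √(s / r)) := by gcongr
    _ = f.natDegree * (4 * W + 1) * (√N * √(s / r)) := by ring

lemma card_le_natDegree_mul_toNat {f : ℤ[X]} (hdeg : 0 < f.natDegree) {U s r : ℤ} (hr : r ≠ 0)
    {S : Finset ℤ} (hS : ∀ a ∈ S, ∃ u ∈ Set.Icc 1 U, s * |f.eval u| = r * f.eval a) :
    S.card ≤ f.natDegree * U.toNat := by
  choose! y hyU hyeq using hS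
  have hfiber : ∀ u ∈ Finset.Icc 1 U, (S.filter (y · = u)).card ≤ f.natDegree := fun u _ ↦ by
    set P : ℤ[X] := C r * f - C (s * |f.eval u|) with hP
    have hPdeg : P.natDegree = f.natDegree := by
      rw [hP, natDegree_sub_C, natDegree_C_mul hr]
    have hP0 : P ≠ 0 := ne_zero_of_natDegree_gt (hPdeg ▸ hdeg)
    rw [← hPdeg]
    refine card_le_degree_of_subset_roots fun a ha ↦ ?_
    obtain ⟨haS, rfl⟩ := Finset.mem_filter.mp ha
    rw [mem_roots hP0, IsRoot.def, hP, eval_sub, eval_mul, eval_C, eval_C, ← hyeq a haS, sub_self]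
  calc S.card ≤ f.natDegree * (Finset.Icc 1 U).card :=
        Finset.card_le_mul_card_image_of_maps_to (fun a ha ↦ Finset.mem_Icc.mpr (hyU a ha)) _ hfiber
    _ = f.natDegree * U.toNat := by rw [Int.card_Icc, add_sub_cancel_right]

lemma exists_card_le_of_subset_valueRatioSet {f : ℤ[X]} (hroots : (f.rootSet ℂ).Nontrivial)
    (hlead : 0 < f.leadingCoeff) :
    ∃ K : ℝ, 0 < K ∧ ∀ N : ℕ, 0 < N → ∀ s r : ℤ, 0 < r → r < s → ∀ S : Finset ℤ,
      (∀ a ∈ S, a ≤ N ∧ N ≤ a ^ 2 ∧ a ∈ valueRatioSet f s r) →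
      (S.card : ℝ) ≤ K * (√N * √(s / r)) := by
  have hd : 0 < f.natDegree :=
    two_pos.trans_le (two_le_natDegree_of_nontrivial_rootSet hroots)
  obtain ⟨U, K, hK, hfar⟩ := exists_card_le_of_eval_eq hroots hlead
  obtain ⟨A, hA⟩ := eventually_atTop.mp
    ((tendsto_eval_int_atTop hd hlead).eventually_gt_atTop 0)
  set V := max A U
  refine ⟨K + f.natDegree * V.toNat, by positivity, fun N hN s r hr hrs S hS ↦ ?_⟩
  classical
  set Far : ℤ → Prop := fun a ↦ ∃ u ∈ Set.Ico U a, s * f.eval u = r * f.eval a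
  have hfarcard := hfar N hN s r hr hrs (S.filter Far) fun a ha ↦ by
    obtain ⟨haS, hafar⟩ := Finset.mem_filter.mp ha
    exact ⟨(hS a haS).1, (hS a haS).2.1, hafar⟩
  have hnearcard := card_le_natDegree_mul_toNat (U := V) (s := s) hd hr.ne'
      (S := S.filter (¬ Far ·)) fun a ha ↦ by
    obtain ⟨haS, hanear⟩ := Finset.mem_filter.mp ha
    obtain ⟨u, ⟨hu, hua⟩, heq⟩ := (hS a haS).2.2
    refine ⟨u, ⟨hu, le_of_not_gt fun hVu ↦ hanear ⟨u, ⟨(le_max_right A U).trans hVu.le, hua⟩, ?_⟩⟩,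
      heq⟩
    rwa [abs_of_pos (hA u ((le_max_left A U).trans hVu.le))] at heq
  have hone : 1 ≤ √(N : ℝ) * √(s / r) := by
    refine one_le_mul_of_one_le_of_one_le (Real.one_le_sqrt.mpr (by exact_mod_cast hN))
      (Real.one_le_sqrt.mpr ?_)
    rw [one_le_div (by exact_mod_cast hr)]
    exact_mod_cast hrs.le
  calc (S.card : ℝ) = (S.filter Far).card + (S.filter (¬ Far ·)).card := by
        exact_mod_cast (Finset.card_filter_add_card_filter_not Far).symm
    _ ≤ K * (√N * √(s / r)) + f.natDegree * V.toNat * (√N * √(s / r)) := by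
        refine add_le_add hfarcard (le_trans ?_ (le_mul_of_one_le_right (by positivity) hone))
        exact_mod_cast hnearcard
    _ = (K + f.natDegree * V.toNat) * (√N * √(s / r)) := by ring

end ValueRatios

section InvisiblePoints

lemma exists_eval_eq_of_not_visibleAlong {F : ℤ[X]} {a h : ℤ} (ha : F.eval a ≠ 0)
    (hinv : ¬ VisibleAlong F a h) :
    ∃ u ∈ Set.Ico 1 a, ∃ k : ℤ, 0 < k ∧ k * F.eval a = h * F.eval u := by
  have ha' : ((F.eval a : ℤ) : ℚ) ≠ 0 := by exact_mod_cast ha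
  simp only [VisibleAlong, not_exists, not_and, not_forall] at hinv
  obtain ⟨u, hu, ⟨k, hk, hku⟩, hua⟩ := hinv (h / (F.eval a : ℤ)) (div_mul_cancel₀ _ ha').symm
  refine ⟨u, ⟨hu, not_le.mp hua⟩, k, hk, ?_⟩
  rw [div_mul_eq_mul_div, eq_div_iff ha'] at hku
  exact_mod_cast hku

lemma exists_pow_dvd_of_mul_pow_eq_mul_pow {m : ℕ} (hm : m ≠ 0) {k h x y : ℤ} (hk : k ≠ 0)
    (hxy : |y| < x) (heq : k * x ^ m = h * y ^ m) :
    ∃ s r : ℕ, 0 < r ∧ r < s ∧ (s : ℤ) ^ m ∣ h ∧ (s : ℤ) * |y| = r * x := by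
  have hx : 0 < x := (abs_nonneg y).trans_lt hxy
  have hy : y ≠ 0 := by
    rintro rfl
    rw [zero_pow hm, mul_zero] at heq
    exact mul_ne_zero hk (pow_pos hx m).ne' heq
  obtain ⟨g, s, r, hg, hcop, hxs, hyr⟩ := Nat.exists_coprime' (m := x.natAbs) (n := y.natAbs)
    (Nat.gcd_pos_of_pos_left _ (Int.natAbs_pos.mpr hx.ne'))
  have hxg : x = s * g := by rw [← abs_of_pos hx, Int.abs_eq_natAbs, hxs, Nat.cast_mul]
  have hyg : |y| = r * g := by rw [Int.abs_eq_natAbs, hyr, Nat.cast_mul]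
  have hr : 0 < r := Nat.pos_of_ne_zero fun hr ↦ by
    rw [hr, zero_mul, Int.natAbs_eq_zero] at hyr
    exact hy hyr
  have hrs : r < s := by
    rw [hxg, hyg] at hxy
    exact_mod_cast lt_of_mul_lt_mul_right hxy g.cast_nonneg
  have habs : |k| * s ^ m = |h| * r ^ m := by
    have habs' := congrArg (|·|) heq
    simp only [abs_mul, abs_pow, abs_of_pos hx, hyg] at habs'
    rw [hxg, mul_pow, mul_pow, ← mul_assoc, ← mul_assoc] at habs'
    exact mul_right_cancel₀ (pow_ne_zero m (by exact_mod_cast hg.ne')) habs'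
  have hdvd : (s : ℤ) ^ m ∣ h := by
    refine (dvd_abs _ _).mp (IsCoprime.dvd_of_dvd_mul_right (z := (r : ℤ) ^ m) ?_ ⟨|k|, ?_⟩)
    · exact (Nat.isCoprime_iff_coprime.mpr hcop).pow
    · rw [← habs, mul_comm]
  exact ⟨s, r, hr, hrs, hdvd, by rw [hxg, hyg]; ring⟩

lemma exists_sq_dvd_of_not_visibleAlong_pow {f : ℤ[X]} {m : ℕ} (hm : 2 ≤ m) {a h : ℤ}
    (hpos : 0 < f.eval a) (hmax : ∀ u ∈ Set.Ico 1 a, |f.eval u| < f.eval a)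
    (hinv : ¬ VisibleAlong (f ^ m) a h) :
    ∃ s r : ℕ, 0 < r ∧ r < s ∧ (s : ℤ) ^ 2 ∣ h ∧ a ∈ valueRatioSet f s r := by
  obtain ⟨u, hu, k, hk, heq⟩ := exists_eval_eq_of_not_visibleAlong
    (by rw [eval_pow]; exact (pow_pos hpos m).ne') hinv
  rw [eval_pow, eval_pow] at heq
  obtain ⟨s, r, hr, hrs, hdvd, hratio⟩ := exists_pow_dvd_of_mul_pow_eq_mul_pow
    (by lia) hk.ne' (hmax u hu) heq
  exact ⟨s, r, hr, hrs, (pow_dvd_pow _ hm).trans hdvd, u, hu, hratio⟩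

end InvisiblePoints

section Counting

lemma sum_inv_sqrt_le (n : ℕ) : ∑ r ∈ Finset.Icc 1 n, (√(r : ℝ))⁻¹ ≤ 2 * √n := by
  induction n with
  | zero => simp
  | succ n ih =>
    have hpos : 0 < √((n + 1 : ℕ) : ℝ) := Real.sqrt_pos.mpr (by positivity)
    have hsq : √((n + 1 : ℕ) : ℝ) ^ 2 = √(n : ℝ) ^ 2 + 1 := by
      rw [Real.sq_sqrt (by positivity), Real.sq_sqrt (by positivity), Nat.cast_add_one]
    have hstep : (√((n + 1 : ℕ) : ℝ))⁻¹ ≤ 2 * √((n + 1 : ℕ) : ℝ) - 2 * √n := by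
      rw [inv_le_iff_one_le_mul₀ hpos]
      nlinarith [sq_nonneg (√((n + 1 : ℕ) : ℝ) - √n)]
    rw [Finset.sum_Icc_succ_top (by lia)]
    linarith

lemma sum_sqrt_div_div_sq_le (s : ℕ) :
    ∑ r ∈ Finset.Ico 1 s, √((s : ℝ) / r) / s ^ 2 ≤ 2 * (s : ℝ)⁻¹ := by
  calc ∑ r ∈ Finset.Ico 1 s, √((s : ℝ) / r) / s ^ 2
      = √s / s ^ 2 * ∑ r ∈ Finset.Ico 1 s, (√(r : ℝ))⁻¹ := by
        rw [Finset.mul_sum]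
        refine Finset.sum_congr rfl fun r _ ↦ ?_
        rw [Real.sqrt_div s.cast_nonneg]
        ring
    _ ≤ √s / s ^ 2 * (2 * √s) := by
        gcongr
        refine (Finset.sum_le_sum_of_subset_of_nonneg Finset.Ico_subset_Icc_self
          fun r _ _ ↦ by positivity).trans (sum_inv_sqrt_le s)
    _ = 2 * (s / (s * s)) := by
        nth_rw 4 [← Real.mul_self_sqrt s.cast_nonneg]
        ring
    _ = 2 * (s : ℝ)⁻¹ := by rw [div_self_mul_self']

lemma sum_sum_sqrt_div_div_sq_le (N : ℕ) :
    ∑ s ∈ Finset.Icc 1 N, ∑ r ∈ Finset.Ico 1 s, √((s : ℝ) / r) / s ^ 2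
      ≤ 2 * (1 + Real.log N) := by
  have hharmonic : ∑ s ∈ Finset.Icc 1 N, (s : ℝ)⁻¹ ≤ 1 + Real.log N := by
    have h := harmonic_le_one_add_log N
    rw [harmonic_eq_sum_Icc] at h
    push_cast at h
    exact h
  calc ∑ s ∈ Finset.Icc 1 N, ∑ r ∈ Finset.Ico 1 s, √((s : ℝ) / r) / s ^ 2
      ≤ ∑ s ∈ Finset.Icc 1 N, 2 * (s : ℝ)⁻¹ :=
        Finset.sum_le_sum fun s _ ↦ sum_sqrt_div_div_sq_le s
    _ ≤ 2 * (1 + Real.log N) := by rw [← Finset.mul_sum]; gcongr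

lemma card_filter_dvd_Ioc_le (N : ℕ) {q : ℤ} (hq : 0 < q) :
    (((Finset.Ioc (0 : ℤ) N).filter (q ∣ ·)).card : ℝ) ≤ N / q := by
  have hcard : (((Finset.Ioc (0 : ℤ) N).filter (q ∣ ·)).card : ℤ) = ⌊(N : ℚ) / q⌋ := by
    rw [Int.Ioc_filter_dvd_card 0 (N : ℤ) hq, Int.cast_zero, zero_div, Int.floor_zero, sub_zero]
    exact max_eq_left (Int.floor_nonneg.mpr (by positivity))
  have hle : (((Finset.Ioc (0 : ℤ) N).filter (q ∣ ·)).card : ℚ) ≤ N / q := by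
    rw [← Int.cast_natCast, hcard]
    exact Int.floor_le _
  exact_mod_cast (Rat.cast_le (K := ℝ)).mpr hle

open Classical in
/-- The points `(a, h)` of `[1, N]²` with `√N ≤ a` that can be invisible along a power of `f`
because `f u = ± (r / s) * f a` in lowest terms for some positive `u < a`, which forces
`s ^ 2 ∣ h`. -/
noncomputable def ratioPoints (f : ℤ[X]) (N s r : ℕ) : Finset (ℤ × ℤ) :=
  (Finset.Ioc (0 : ℤ) N).filter (fun a : ℤ ↦ N ≤ a ^ 2 ∧ a ∈ valueRatioSet f s r) ×ˢ
    (Finset.Ioc (0 : ℤ) N).filter ((s : ℤ) ^ 2 ∣ ·)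

/-- The union of the `ratioPoints f N s r` over all `1 ≤ r < s ≤ N`. -/
noncomputable def allRatioPoints (f : ℤ[X]) (N : ℕ) : Finset (ℤ × ℤ) :=
  (Finset.Icc 1 N).biUnion fun s ↦ (Finset.Ico 1 s).biUnion (ratioPoints f N s)

lemma exists_card_ratioPoints_le {f : ℤ[X]} (hroots : (f.rootSet ℂ).Nontrivial)
    (hlead : 0 < f.leadingCoeff) :
    ∃ K : ℝ, 0 < K ∧ ∀ N : ℕ, 0 < N → ∀ s r : ℕ, 0 < r → r < s →
      ((ratioPoints f N s r).card : ℝ) ≤ K * (N * √N) * (√((s : ℝ) / r) / s ^ 2) := by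
  obtain ⟨K, hK, hcount⟩ := exists_card_le_of_subset_valueRatioSet hroots hlead
  refine ⟨K, hK, fun N hN s r hr hrs ↦ ?_⟩
  classical
  have habscissae := hcount N hN s r (by exact_mod_cast hr) (by exact_mod_cast hrs)
    ((Finset.Ioc (0 : ℤ) N).filter fun a ↦ N ≤ a ^ 2 ∧ a ∈ valueRatioSet f s r) fun a ha ↦
      have ha' := Finset.mem_filter.mp ha
      ⟨(Finset.mem_Ioc.mp ha'.1).2, ha'.2⟩
  have hordinates := card_filter_dvd_Ioc_le N (q := (s : ℤ) ^ 2)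
    (pow_pos (by exact_mod_cast hr.trans hrs) 2)
  push_cast at habscissae hordinates
  rw [ratioPoints, Finset.card_product, Nat.cast_mul]
  calc _ ≤ K * (√N * √((s : ℝ) / r)) * (N / s ^ 2) := by gcongr
    _ = K * (N * √N) * (√((s : ℝ) / r) / s ^ 2) := by ring

lemma exists_card_allRatioPoints_le {f : ℤ[X]} (hroots : (f.rootSet ℂ).Nontrivial)
    (hlead : 0 < f.leadingCoeff) :
    ∃ K : ℝ, 0 < K ∧ ∀ N : ℕ, 0 < N →
      ((allRatioPoints f N).card : ℝ) ≤ K * (N * √N * (1 + Real.log N)) := by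
  obtain ⟨K, hK, hcount⟩ := exists_card_ratioPoints_le hroots hlead
  refine ⟨2 * K, by positivity, fun N hN ↦ ?_⟩
  have hunion : (allRatioPoints f N).card ≤
      ∑ s ∈ Finset.Icc 1 N, ∑ r ∈ Finset.Ico 1 s, (ratioPoints f N s r).card :=
    Finset.card_biUnion_le.trans (Finset.sum_le_sum fun s _ ↦ Finset.card_biUnion_le)
  calc ((allRatioPoints f N).card : ℝ)
      ≤ ∑ s ∈ Finset.Icc 1 N, ∑ r ∈ Finset.Ico 1 s, ((ratioPoints f N s r).card : ℝ) := by
        exact_mod_cast hunion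
    _ ≤ ∑ s ∈ Finset.Icc 1 N, ∑ r ∈ Finset.Ico 1 s,
          K * (N * √N) * (√((s : ℝ) / r) / s ^ 2) := by
        refine Finset.sum_le_sum fun s _ ↦ Finset.sum_le_sum fun r hr ↦ ?_
        exact hcount N hN s r (Finset.mem_Ico.mp hr).1 (Finset.mem_Ico.mp hr).2
    _ ≤ K * (N * √N) * (2 * (1 + Real.log N)) := by
        simp only [← Finset.mul_sum]
        gcongr
        exact sum_sum_sqrt_div_div_sq_le N
    _ = 2 * K * (N * √N * (1 + Real.log N)) := by ring

lemma card_Icc_sqrt_add_product_le {N : ℕ} (hN : 0 < N) (A : ℕ) :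
    ((Finset.Icc (1 : ℤ) (N.sqrt + A : ℕ) ×ˢ Finset.Icc (1 : ℤ) N).card : ℝ) ≤
      (1 + A) * (N * √N) := by
  have hone : 1 ≤ √(N : ℝ) := Real.one_le_sqrt.mpr (by exact_mod_cast hN)
  rw [Finset.card_product, Int.card_Icc, Int.card_Icc, add_sub_cancel_right,
    add_sub_cancel_right, Int.toNat_natCast, Int.toNat_natCast]
  calc (((N.sqrt + A) * N : ℕ) : ℝ) = (N.sqrt + A) * N := by push_cast; rfl
    _ ≤ (√N + A * √N) * N := by
        gcongr
        · exact Real.nat_sqrt_le_real_sqrt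
        · exact le_mul_of_one_le_right A.cast_nonneg hone
    _ = (1 + A) * (N * √N) := by ring

lemma exists_invisibleSet_pow_subset {f : ℤ[X]} (hdeg : 0 < f.natDegree)
    (hlead : 0 < f.leadingCoeff) {m : ℕ} (hm : 2 ≤ m) :
    ∃ A : ℕ, ∀ N : ℕ, invisibleSet (f ^ m) N ⊆
      ↑(Finset.Icc (1 : ℤ) (N.sqrt + A : ℕ) ×ˢ Finset.Icc (1 : ℤ) N ∪ allRatioPoints f N) := by
  obtain ⟨A, hA⟩ := eventually_atTop.mp
    (((tendsto_eval_int_atTop hdeg hlead).eventually_gt_atTop 0).and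
      (eventually_forall_abs_eval_lt hdeg hlead))
  refine ⟨A.toNat, fun N ⟨a, h⟩ hah ↦ ?_⟩
  obtain ⟨ha1 : 1 ≤ a, haN : a ≤ N, hh1 : 1 ≤ h, hhN : h ≤ N, hinv⟩ := hah
  rw [Finset.coe_union]
  rcases le_or_gt a (N.sqrt + A.toNat : ℕ) with hsmall | hlarge
  · left
    rw [Finset.mem_coe, Finset.mem_product, Finset.mem_Icc, Finset.mem_Icc]
    exact ⟨⟨ha1, hsmall⟩, hh1, hhN⟩
  right
  obtain ⟨hpos, hmax⟩ := hA a (by lia)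
  obtain ⟨s, r, hr, hrs, hdvd, hratio⟩ := exists_sq_dvd_of_not_visibleAlong_pow hm hpos hmax hinv
  have hsN : s ≤ N := by
    have hsq : (s : ℤ) ^ 2 ≤ N := (Int.le_of_dvd hh1 hdvd).trans hhN
    exact (Nat.le_self_pow two_ne_zero s).trans (by exact_mod_cast hsq)
  have hNa : N ≤ a ^ 2 := by
    have hsqrt : (N : ℤ) < (N.sqrt + 1) ^ 2 := by exact_mod_cast Nat.lt_succ_sqrt' N
    have hle : (N.sqrt : ℤ) + 1 ≤ a := by lia
    nlinarith
  simp only [Finset.mem_coe, allRatioPoints, Finset.mem_biUnion, ratioPoints, Finset.mem_product,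
    Finset.mem_filter, Finset.mem_Icc, Finset.mem_Ico, Finset.mem_Ioc]
  exact ⟨s, ⟨by lia, hsN⟩, r, ⟨hr, hrs⟩, ⟨⟨ha1, haN⟩, hNa, hratio⟩, ⟨hh1, hhN⟩, hdvd⟩

lemma exists_ncard_invisibleSet_pow_le {f : ℤ[X]} (hroots : (f.rootSet ℂ).Nontrivial)
    (hlead : 0 < f.leadingCoeff) {m : ℕ} (hm : 2 ≤ m) :
    ∃ K : ℝ, 0 < K ∧ ∀ N : ℕ, 0 < N →
      ((invisibleSet (f ^ m) N).ncard : ℝ) ≤ K * (N * √N * (1 + Real.log N)) := by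
  have hdeg : 0 < f.natDegree :=
    two_pos.trans_le (two_le_natDegree_of_nontrivial_rootSet hroots)
  obtain ⟨A, hcover⟩ := exists_invisibleSet_pow_subset hdeg hlead hm
  obtain ⟨K, hK, hcount⟩ := exists_card_allRatioPoints_le hroots hlead
  refine ⟨1 + A + K, by positivity, fun N hN ↦ ?_⟩
  have hlog : 0 ≤ Real.log N := Real.log_natCast_nonneg N
  set B := Finset.Icc (1 : ℤ) (N.sqrt + A : ℕ) ×ˢ Finset.Icc (1 : ℤ) N
  have hcard : (invisibleSet (f ^ m) N).ncard ≤ B.card + (allRatioPoints f N).card := by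
    refine (Set.ncard_le_ncard (hcover N) (Finset.finite_toSet _)).trans ?_
    rw [Set.ncard_coe_finset]
    exact Finset.card_union_le _ _
  have hB : (B.card : ℝ) ≤ (1 + A) * (N * √N * (1 + Real.log N)) := by
    refine (card_Icc_sqrt_add_product_le hN A).trans ?_
    exact mul_le_mul_of_nonneg_left (le_mul_of_one_le_right (by positivity) (by linarith))
      (by positivity)
  calc ((invisibleSet (f ^ m) N).ncard : ℝ) ≤ B.card + (allRatioPoints f N).card := by
        exact_mod_cast hcard
    _ ≤ (1 + A) * (N * √N * (1 + Real.log N)) + K * (N * √N * (1 + Real.log N)) :=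
        add_le_add hB (hcount N hN)
    _ = (1 + A + K) * (N * √N * (1 + Real.log N)) := by ring

lemma one_add_log_le_rpow {x ε : ℝ} (hx : 1 ≤ x) (hε : 0 < ε) :
    1 + Real.log x ≤ (1 + ε⁻¹) * x ^ ε := by
  have hlog : Real.log x ≤ x ^ ε / ε := Real.log_le_rpow_div (by linarith) hε
  have hone : 1 ≤ x ^ ε := Real.one_le_rpow hx hε.le
  calc 1 + Real.log x ≤ x ^ ε + x ^ ε / ε := add_le_add hone hlog
    _ = (1 + ε⁻¹) * x ^ ε := by ring

end Counting

theorem invisible_count_upper_bound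
    (f : Polynomial ℤ) (hd : 2 ≤ f.natDegree) (hlead : 0 < f.leadingCoeff)
    (hroots : ∃ α β : AlgebraicClosure ℚ, α ≠ β ∧
      Polynomial.aeval α f = 0 ∧ Polynomial.aeval β f = 0)
    (m : ℕ) (hm : 2 ≤ m) :
    ∃ δ : ℕ, 2 ≤ δ ∧
      (∀ s r : ℤ, 0 < r → r < s →
        ∀ g : MvPolynomial (Fin 2) ℝ, Irreducible g → g ∣ Gpoly f s r →
          δ ≤ g.totalDegree) ∧
      ∀ ε : ℝ, 0 < ε → ∃ C : ℝ, 0 < C ∧ ∀ N : ℕ, 0 < N →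
        ((invisibleSet (f ^ m) N).ncard : ℝ) ≤ C * (N : ℝ) ^ ((1 : ℝ) + 1 / δ + ε) := by
  have hroots' := nontrivial_rootSet_complex (leadingCoeff_ne_zero.mp hlead.ne') hroots
  obtain ⟨K, hK, hcount⟩ := exists_ncard_invisibleSet_pow_le hroots' hlead hm
  refine ⟨2, le_rfl, fun s r hr hrs g hirr hdvd ↦
    two_le_totalDegree_of_irreducible_of_dvd_Gpoly hroots' hr hrs hirr hdvd, fun ε hε ↦
    ⟨K * (1 + ε⁻¹), by positivity, fun N hN ↦ ?_⟩⟩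
  have hN' : (1 : ℝ) ≤ N := by exact_mod_cast hN
  calc ((invisibleSet (f ^ m) N).ncard : ℝ) ≤ K * (N * √N * (1 + Real.log N)) := hcount N hN
    _ ≤ K * (N * √N * ((1 + ε⁻¹) * (N : ℝ) ^ ε)) := by
        gcongr
        exact one_add_log_le_rpow hN' hε
    _ = K * (1 + ε⁻¹) * (N : ℝ) ^ (1 + 1 / (2 : ℕ) + ε : ℝ) := by
        rw [Real.rpow_add (by positivity), Real.rpow_add (by positivity), Real.rpow_one,
          Nat.cast_ofNat, ← Real.sqrt_eq_rpow]
        ring
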